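/- Suppose u, v ∈ B = ℂ[x,y] generate B as a ℂ-algebra. Let s, p, k ≥ 1 be integers, let g be a univariate polynomial over ℂ of degree at most k−2 (g = 0 when k = 1), set F = u·v^{k−1} + g(v), and suppose P ∈ B satisfies v^{k−1}·P = (1 + v·F^{s+1})ᵖ − F. If all coefficients of P are real (so P ∈ A = ℝ[x,y]), then some unit of the quotient ring A/PA is not the residue class of a real constant (i.e., (A/PA)* ≠ ℝ*). -/

import Mathlib

open MvPolynomial

/-!
Over `ℂ`, the curve `P = 0` is parametrised by `t = 1 + v F ^ (s + 1)`: on it `F = t ^ p`,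
`v = (t - 1) / t ^ N` with `N = p (s + 1)`, and `u = (t ^ p - g(v)) / v ^ (k - 1)`. In particular
`h = 1 + v F ^ (s + 1)` is a unit modulo `P`. Let `σ` be the complex conjugation of coefficients,
which fixes `P`. The norm `h σ(h)` is a real polynomial and a unit of `ℝ[x,y] / (P)`; it is the unit
that is exhibited.

Suppose it were a real constant `r`. Then `σ(h)` takes the value `r / t` at the point with parameter
`t` (so `r ≠ 0`, both `h` and `σ(h)` being units modulo `P`), and `σ` exchanges the two ends
`t → ∞` and `t → 0` of the curve. Writing `t = 1 / e` and letting `e → 0`, one has `u → ∞`, `v → 0`, while the conjugate equations at the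
parameter `r e` give `σ(u) → 0`, because `deg g ≤ k - 2`.

Now `σ(u)` belongs to a pair of generators of `ℂ[x,y]`, i.e. it is a coordinate. Written as a
polynomial in `u` and `v`, a coordinate is either of positive degree in `u` with constant leading
coefficient, or of the form `a (v - b)` (`coordinate_dichotomy`): the quotient by a coordinate is
`ℂ[τ]`, and there either `v` is nonconstant, so that `u` is integral over `ℂ[v]` and the
coordinate divides a polynomial monic in `u`, or `v` is a constant `b` and the coordinate
divides `v - b`. In the first case `σ(u) → 0` contradicts `u → ∞`, `v → 0`. In the second case
`b = 0`, and comparing the exact growth of `σ(u) = a v` with the conjugate equation is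
contradictory (`ends_incompatible`).
-/

/-! ### Coordinates of the plane -/

/-- The kernels of the iterates of `f` form an ascending chain, which stabilizes. -/
theorem injective_of_surjective_ringEnd {R : Type*} [CommRing R] [IsNoetherianRing R]
    (f : R →+* R) (hf : Function.Surjective f) : Function.Injective f := by
  have hmono : ∀ n, RingHom.ker (f ^ n) ≤ RingHom.ker (f ^ (n + 1)) := by
    intro n x hx
    rw [RingHom.mem_ker] at hx ⊢
    rw [pow_succ', RingHom.mul_def, RingHom.comp_apply, hx, map_zero]
  obtain ⟨n, hn⟩ := monotone_stabilizes_iff_noetherian.mpr ‹IsNoetherianRing R›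
    ⟨fun n => RingHom.ker (f ^ n), monotone_nat_of_le_succ hmono⟩
  rw [injective_iff_map_eq_zero]
  intro a ha
  have hsurj : Function.Surjective (f ^ n : R →+* R) := by
    rw [RingHom.coe_pow]
    exact hf.iterate n
  obtain ⟨b, rfl⟩ := hsurj a
  have hb : b ∈ RingHom.ker (f ^ (n + 1)) := by
    rw [RingHom.mem_ker, pow_succ', RingHom.mul_def, RingHom.comp_apply, ha]
  have := hn (n + 1) (Nat.le_succ n)
  change RingHom.ker (f ^ n) = RingHom.ker (f ^ (n+1)) at this
  rw [← this, RingHom.mem_ker] at hb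
  exact hb

open scoped Polynomial in
/-- Two generators of `ℂ[x,y]` are algebraically independent. In `ℂ[X][X]` the outer variable
corresponds to `u`, the inner one to `v`. -/
theorem exists_coordEquiv (u v : MvPolynomial (Fin 2) ℂ)
    (huv : Algebra.adjoin ℂ {u, v} = ⊤) :
    ∃ E : ℂ[X][X] ≃ₐ[ℂ] MvPolynomial (Fin 2) ℂ, E Polynomial.X = u ∧
      E (Polynomial.C Polynomial.X) = v := by
  let Φ : ℂ[X][X] →ₐ[ℂ] MvPolynomial (Fin 2) ℂ := Polynomial.aevalAeval v u
  have hX : Φ Polynomial.X = u := by simp [Φ]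
  have hC : Φ (Polynomial.C Polynomial.X) = v := by simp [Φ]
  have hsurj : Function.Surjective Φ := by
    rw [← AlgHom.range_eq_top, eq_top_iff, ← huv, Algebra.adjoin_le_iff]
    rintro x (rfl | rfl)
    · exact ⟨Polynomial.X, hX⟩
    · exact ⟨Polynomial.C Polynomial.X, hC⟩
  let e := Polynomial.Bivariate.equivMvPolynomial ℂ
  have hinj : Function.Injective Φ := by
    have h := injective_of_surjective_ringEnd
      ((e.symm : MvPolynomial (Fin 2) ℂ →ₐ[ℂ] ℂ[X][X]).comp Φ).toRingHom
      (e.symm.surjective.comp hsurj)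
    intro a b hab
    apply h
    simp [hab]
  exact ⟨AlgEquiv.ofBijective Φ ⟨hinj, hsurj⟩, hX, hC⟩

open scoped Polynomial in
/-- Let `f` be a polynomial in the coordinates given by `E` that is itself the first of the
coordinates given by `E'`. Then either `f` has positive degree in the outer variable and constant
leading coefficient, or `f` is a linear polynomial in the inner variable. -/
theorem coordinate_dichotomy (E E' : ℂ[X][X] ≃ₐ[ℂ] MvPolynomial (Fin 2) ℂ) (f : ℂ[X][X])
    (hf : E f = E' Polynomial.X) :
    (0 < f.natDegree ∧ ∃ a : ℂ, a ≠ 0 ∧ f.leadingCoeff = Polynomial.C a) ∨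
      ∃ a b : ℂ, a ≠ 0 ∧ f = Polynomial.C (Polynomial.C a * (Polynomial.X - Polynomial.C b)) := by
  -- `θ` is the quotient map by `(f)`, the quotient being identified with `ℂ[τ]`
  let θ : ℂ[X][X] →ₐ[ℂ] ℂ[X] :=
    (((Polynomial.aeval (0 : ℂ[X])).restrictScalars ℂ : ℂ[X][X] →ₐ[ℂ] ℂ[X])).comp
      ((E.trans E'.symm : ℂ[X][X] ≃ₐ[ℂ] ℂ[X][X]) : ℂ[X][X] →ₐ[ℂ] ℂ[X][X])
  have hker : ∀ m, θ m = 0 → f ∣ m := by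
    intro m hm
    have h1 : (Polynomial.X : ℂ[X][X]) ∣ E'.symm (E m) := by
      rw [Polynomial.X_dvd_iff, Polynomial.coeff_zero_eq_aeval_zero]
      simpa [θ] using hm
    obtain ⟨q, hq⟩ := h1
    refine ⟨E.symm (E' q), E.injective ?_⟩
    rw [map_mul, hf, AlgEquiv.apply_symm_apply, ← map_mul, ← hq, AlgEquiv.apply_symm_apply]
  have hθf : θ f = 0 := by simp [θ, hf]
  have hnu : ¬ IsUnit f := fun h => by
    have := h.map θ
    rw [hθf] at this
    exact not_isUnit_zero this
  set a : ℂ[X] := θ (Polynomial.C Polynomial.X) with ha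
  have hθC : ∀ q : ℂ[X], θ (Polynomial.C q) = q.comp a := by
    intro q
    have : (θ.comp (Polynomial.CAlgHom : ℂ[X] →ₐ[ℂ] ℂ[X][X])) = Polynomial.aeval a := by
      ext; simp [ha]
    have := DFunLike.congr_fun this q
    simpa [Polynomial.comp_eq_aeval] using this
  by_cases hdeg : a.natDegree = 0
  · right
    obtain ⟨c, hc⟩ := Polynomial.natDegree_eq_zero.mp hdeg
    have hd : f ∣ Polynomial.C (Polynomial.X - Polynomial.C c) := hker _ (by rw [hθC]; simp [← hc])
    have hirr : Irreducible (Polynomial.C (Polynomial.X - Polynomial.C c) : ℂ[X][X]) :=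
      (Polynomial.prime_C_iff.mpr (Polynomial.prime_X_sub_C c)).irreducible
    have hass : Associated f (Polynomial.C (Polynomial.X - Polynomial.C c)) := by
      refine ((hirr.dvd_iff.mp hd).resolve_left hnu).symm
    obtain ⟨w, hw⟩ := hass.symm
    obtain ⟨w', hw', hww'⟩ := Polynomial.isUnit_iff.mp w.isUnit
    obtain ⟨α, hα, hαw⟩ := Polynomial.isUnit_iff.mp hw'
    refine ⟨α, c, hα.ne_zero, ?_⟩
    rw [← hw, ← hww', ← hαw, ← Polynomial.C_mul, mul_comm]
  · left
    -- all of `ℂ[τ]`, in particular the image of the outer variable, is integral over `ℂ[a]`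
    have hint : ∃ m : ℂ[X][X], m.Monic ∧ θ m = 0 := by
      let φ : ℂ[X] →+* ℂ[X] := Polynomial.compRingHom a
      have hφC : ∀ c, φ (Polynomial.C c) = Polynomial.C c := fun c => by simp [φ]
      have ha0 : a ≠ 0 := by rintro h; simp [h] at hdeg
      have hXint : φ.IsIntegralElem Polynomial.X := by
        let m₀ : ℂ[X][X] := (Polynomial.C a.leadingCoeff⁻¹ * a).map Polynomial.C
        have hmon : (Polynomial.C a.leadingCoeff⁻¹ * a).Monic := by
          rw [mul_comm]
          exact Polynomial.monic_mul_leadingCoeff_inv ha0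
        have hdeg₀ : m₀.degree = a.natDegree := by
          rw [Polynomial.degree_map_eq_of_injective Polynomial.C_injective,
            Polynomial.degree_C_mul (inv_ne_zero (by simpa using ha0)),
            Polynomial.degree_eq_natDegree ha0]
        refine ⟨m₀ - Polynomial.C (Polynomial.C a.leadingCoeff⁻¹ * Polynomial.X),
          (hmon.map _).sub_of_left ?_, ?_⟩
        · refine Polynomial.degree_C_le.trans_lt ?_
          change 0 < m₀.degree
          rw [hdeg₀]
          exact_mod_cast Nat.pos_of_ne_zero hdeg
        · have hcomp : φ.comp Polynomial.C = Polynomial.C := by ext; simp [φ]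
          simp only [m₀, Polynomial.eval₂_sub, Polynomial.eval₂_map, hcomp, Polynomial.eval₂_C,
            Polynomial.eval₂_mul, Polynomial.eval₂_C_X, map_mul, hφC]
          simp [φ]
      have hall : ∀ b : ℂ[X], φ.IsIntegralElem b := by
        intro b
        induction b using Polynomial.induction_on' with
        | add p q hp hq => exact hp.add _ hq
        | monomial n c =>
          rw [← Polynomial.C_mul_X_pow_eq_monomial, ← hφC]
          refine RingHom.IsIntegralElem.mul _ (φ.isIntegralElem_map) ?_
          induction n with
          | zero => rw [pow_zero, ← map_one φ]; exact φ.isIntegralElem_map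
          | succ n ih => rw [pow_succ]; exact ih.mul _ hXint
      obtain ⟨m, hm, hm0⟩ := hall (θ Polynomial.X)
      refine ⟨m, hm, ?_⟩
      rw [← hm0]
      conv_lhs => rw [m.as_sum_range_C_mul_X_pow]
      rw [Polynomial.eval₂_eq_sum_range, map_sum]
      simp [hθC, φ]
    obtain ⟨m, hm, hm0⟩ := hint
    obtain ⟨q, rfl⟩ := hker m hm0
    have hu : IsUnit f.leadingCoeff := by
      apply IsUnit.of_mul_eq_one q.leadingCoeff
      rw [← Polynomial.leadingCoeff_mul]; exact hm
    obtain ⟨α, hα, hαf⟩ := Polynomial.isUnit_iff.mp hu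
    refine ⟨Nat.pos_of_ne_zero fun h0 => hnu ?_, α, hα.ne_zero, hαf.symm⟩
    rw [Polynomial.eq_C_of_natDegree_eq_zero h0] at hu ⊢
    rw [Polynomial.leadingCoeff_C] at hu
    exact hu.map Polynomial.C

/-! ### Asymptotics at the two ends of the curve -/

open scoped Polynomial in
/-- Since `deg g ≤ k - 2`, the function `g(x) / x ^ (k - 1)` is a polynomial in `w = 1 / x` that
vanishes at `w = 0`. -/
theorem exists_reflected (k : ℕ) (g : ℂ[X]) (hgdeg : g.natDegree ≤ k - 2) (hg1 : k = 1 → g = 0)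
    (hk : 1 ≤ k) :
    ∃ G : ℂ[X],
      ∀ x w : ℂ, x * w = 1 → w ^ (k - 1) * g.eval x = w * G.eval w := by
  rcases Nat.lt_or_ge k 2 with h | h
  · obtain rfl : k = 1 := by omega
    exact ⟨0, fun x w _ => by simp [hg1 rfl]⟩
  · refine ⟨g.reflect (k - 2), fun x w hxw => ?_⟩
    let _ : Invertible x := ⟨w, by rw [mul_comm]; exact hxw, hxw⟩
    have hinv : ⅟x = w := rfl
    have := Polynomial.eval₂_reflect_mul_pow (RingHom.id ℂ) x (k - 2) g hgdeg
    rw [hinv, Polynomial.eval₂_id, Polynomial.eval₂_id] at this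
    rw [← this]
    obtain ⟨m, rfl⟩ := Nat.exists_eq_add_of_le h
    have h1 : 2 + m - 1 = m + 1 := by omega
    have h2 : 2 + m - 2 = m := by omega
    rw [h1, h2]
    have h3 : x ^ m * w ^ m = 1 := by rw [← mul_pow, hxw, one_pow]
    linear_combination w * Polynomial.eval w (g.reflect m) * h3

open scoped Polynomial Topology in
open Filter in
/-- No coordinate `f` in `u` (outer variable) and `v` (inner variable) can play the role of the
conjugate of `u` when conjugation exchanges the two ends of the curve. In `H`, the pair `(U, V)` is
the point with parameter `1 / e`, and `(f(U, V), V')` is the point with parameter `r * e` of the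
conjugate curve, whose equation involves the conjugate `g'` of `g`. -/
theorem ends_incompatible (s p k : ℕ) (hs : 1 ≤ s) (hp : 1 ≤ p) (hk : 1 ≤ k)
    (g g' : ℂ[X])
    (hgdeg' : g'.natDegree ≤ k - 2) (hg1' : k = 1 → g' = 0)
    (r : ℂ) (f : ℂ[X][X])
    (hf : (0 < f.natDegree ∧ ∃ a : ℂ, a ≠ 0 ∧ f.leadingCoeff = Polynomial.C a) ∨
      ∃ a b : ℂ, a ≠ 0 ∧ f = Polynomial.C (Polynomial.C a * (Polynomial.X - Polynomial.C b)))
    (H : ∀ e U V : ℂ, e ≠ 0 → e ≠ 1 → V = (1 - e) * e ^ (p * (s + 1) - 1) →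
      U * V ^ (k - 1) = e⁻¹ ^ p - g.eval V →
      ∃ V' : ℂ, V' * (r * e) ^ (p * (s + 1)) = r * e - 1 ∧
        f.evalEval V U * V' ^ (k - 1) = (r * e) ^ p - g'.eval V') : False := by
  set N := p * (s + 1) with hN
  have hN2 : p + 1 ≤ N := by rw [hN]; nlinarith
  set V : ℂ → ℂ := fun e => (1 - e) * e ^ (N - 1) with hV
  set U : ℂ → ℂ := fun e => (e⁻¹ ^ p - g.eval (V e)) / V e ^ (k - 1) with hU
  have hV0 : ∀ e, e ≠ 0 → e ≠ 1 → V e ≠ 0 := fun e h0 h1 =>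
    mul_ne_zero (sub_ne_zero.mpr h1.symm) (pow_ne_zero _ h0)
  have H' : ∀ e, e ≠ 0 → e ≠ 1 → ∃ V' : ℂ, V' * (r * e) ^ N = r * e - 1 ∧
        f.evalEval (V e) (U e) * V' ^ (k - 1) = (r * e) ^ p - g'.eval V' := by
    intro e h0 h1
    exact H e (U e) (V e) h0 h1 rfl (div_mul_cancel₀ _ (pow_ne_zero _ (hV0 e h0 h1)))
  -- `w = 1 / V'`
  obtain ⟨G, hG⟩ := exists_reflected k g' hgdeg' hg1' hk
  set W : ℂ → ℂ := fun e => r ^ N / (r * e - 1) with hW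
  set w : ℂ → ℂ := fun e => e ^ N * W e with hw
  have hkey : ∀ e, e ≠ 0 → e ≠ 1 → r * e ≠ 1 →
      f.evalEval (V e) (U e) = w e ^ (k - 1) * (r * e) ^ p - w e * G.eval (w e) := by
    intro e h0 h1 hr1
    obtain ⟨V', h2, h3⟩ := H' e h0 h1
    have hsub : r * e - 1 ≠ 0 := sub_ne_zero.mpr hr1
    have hVw : V' * w e = 1 := by
      simp only [hw, hW]
      rw [mul_pow] at h2
      field_simp
      linear_combination h2
    rw [← hG V' _ hVw]
    have h4 : V' ^ (k - 1) * w e ^ (k - 1) = 1 := by rw [← mul_pow, hVw, one_pow]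
    linear_combination w e ^ (k - 1) * h3 - f.evalEval (V e) (U e) * h4
  -- limits as `e → 0`
  have te : Tendsto (fun e : ℂ => e) (𝓝[≠] 0) (𝓝 0) := tendsto_nhdsWithin_of_tendsto_nhds tendsto_id
  have good : ∀ᶠ e : ℂ in 𝓝[≠] 0, e ≠ 0 ∧ e ≠ 1 ∧ r * e ≠ 1 := by
    have a1 : ∀ᶠ e : ℂ in 𝓝[≠] 0, e ≠ 0 := eventually_mem_nhdsWithin
    have a2 : ∀ᶠ e : ℂ in 𝓝[≠] 0, e ≠ 1 := te.eventually_ne zero_ne_one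
    have a3 : ∀ᶠ e : ℂ in 𝓝[≠] 0, r * e ≠ 1 := by
      have : Tendsto (fun e : ℂ => r * e) (𝓝[≠] 0) (𝓝 (r * 0)) := te.const_mul r
      exact this.eventually_ne (by simp)
    exact a1.and (a2.and a3)
  have tV : Tendsto V (𝓝[≠] 0) (𝓝 0) := by
    have : Tendsto V (𝓝[≠] 0) (𝓝 ((1 - 0) * 0 ^ (N - 1))) :=
      (tendsto_const_nhds.sub te).mul (te.pow _)
    rwa [zero_pow (by omega), mul_zero] at this
  have tW : Tendsto W (𝓝[≠] 0) (𝓝 (-r ^ N)) := by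
    have : Tendsto W (𝓝[≠] 0) (𝓝 (r ^ N / (r * 0 - 1))) :=
      tendsto_const_nhds.div ((te.const_mul r).sub tendsto_const_nhds) (by simp)
    simpa [div_neg] using this
  have tw : Tendsto w (𝓝[≠] 0) (𝓝 0) := by
    have := (te.pow N).mul tW
    rwa [zero_pow (by omega), zero_mul] at this
  have tG : Tendsto (fun e => G.eval (w e)) (𝓝[≠] 0) (𝓝 (G.eval 0)) :=
    (G.continuous.tendsto 0).comp tw
  have tre : Tendsto (fun e : ℂ => (r * e) ^ p) (𝓝[≠] 0) (𝓝 0) := by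
    have := (te.const_mul r).pow p
    rwa [mul_zero, zero_pow (by omega)] at this
  have tU' : Tendsto (fun e => f.evalEval (V e) (U e)) (𝓝[≠] 0) (𝓝 0) := by
    have h1 := ((tw.pow (k - 1)).mul tre).sub (tw.mul tG)
    rw [mul_zero, zero_mul, sub_zero] at h1
    exact h1.congr' (good.mono fun e he => (hkey e he.1 he.2.1 he.2.2).symm)
  rcases hf with ⟨hn, a, ha, hlead⟩ | ⟨a, b, ha, rfl⟩
  · -- `y = 1 / U` near `e = 0`, written so that `y → 0` is visible; then `f(U, V) y ^ n` tends both
    -- to `0` and to the leading coefficient of `f`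
    set D : ℂ → ℂ := fun e => 1 - e ^ p * g.eval (V e) with hD
    have tD : Tendsto D (𝓝[≠] 0) (𝓝 1) := by
      have h1 : Tendsto (fun e => g.eval (V e)) (𝓝[≠] 0) (𝓝 (g.eval 0)) :=
        (g.continuous.tendsto 0).comp tV
      have := (tendsto_const_nhds (x := (1 : ℂ))).sub ((te.pow p).mul h1)
      rwa [zero_pow (by omega), zero_mul, sub_zero] at this
    set y : ℂ → ℂ := fun e => V e ^ (k - 1) * e ^ p / D e with hy
    have ty : Tendsto y (𝓝[≠] 0) (𝓝 0) := by
      have := ((tV.pow (k - 1)).mul (te.pow p)).div tD one_ne_zero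
      rwa [zero_pow (by omega : p ≠ 0), mul_zero, zero_div] at this
    have hUy : ∀ᶠ e in 𝓝[≠] (0 : ℂ), U e * y e = 1 := by
      filter_upwards [good, tD.eventually_ne one_ne_zero] with e he hDe
      have hVe := pow_ne_zero (k - 1) (hV0 e he.1 he.2.1)
      have h0 := pow_ne_zero p he.1
      have : e⁻¹ ^ p - g.eval (V e) = D e / e ^ p := by
        rw [hD, inv_pow]; field_simp
      simp only [hU, hy, this]
      field_simp
    set n := f.natDegree with hn'
    have t1 : Tendsto (fun e => ∑ i ∈ Finset.range (n + 1),
        (f.coeff i).eval (V e) * y e ^ (n - i)) (𝓝[≠] 0)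
        (𝓝 (∑ i ∈ Finset.range (n + 1), (f.coeff i).eval 0 * 0 ^ (n - i))) :=
      tendsto_finsetSum _ fun i _ =>
        (((f.coeff i).continuous.tendsto 0).comp tV).mul (ty.pow _)
    have t2 : ∑ i ∈ Finset.range (n + 1), (f.coeff i).eval 0 * 0 ^ (n - i) = a := by
      rw [Finset.sum_range_succ, Finset.sum_eq_zero, zero_add, Nat.sub_self, pow_zero, mul_one,
        hn', Polynomial.coeff_natDegree, hlead, Polynomial.eval_C]
      intro i hi
      rw [Finset.mem_range] at hi
      rw [zero_pow (by omega), mul_zero]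
    have t3 : Tendsto (fun e => f.evalEval (V e) (U e) * y e ^ n) (𝓝[≠] 0) (𝓝 0) := by
      have := tU'.mul (ty.pow n)
      rwa [zero_mul] at this
    have t4 : Tendsto (fun e => f.evalEval (V e) (U e) * y e ^ n) (𝓝[≠] 0) (𝓝 a) := by
      rw [t2] at t1
      refine t1.congr' (hUy.mono fun e he => ?_)
      change _ = f.evalEval (V e) (U e) * y e ^ n
      rw [show f.evalEval (V e) (U e) = (f.eval (Polynomial.C (U e))).eval (V e) from rfl,
        Polynomial.eval_eq_sum_range (p := f), Polynomial.eval_finsetSum,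
        Finset.sum_mul]
      refine Finset.sum_congr rfl fun i hi => ?_
      have hi' : i ≤ n := Nat.lt_succ_iff.mp (Finset.mem_range.mp hi)
      obtain ⟨j, hj⟩ := Nat.exists_eq_add_of_le hi'
      have : U e ^ i * y e ^ i = 1 := by rw [← mul_pow, he, one_pow]
      simp only [Polynomial.eval_mul, Polynomial.eval_pow, Polynomial.eval_C]
      rw [hj, Nat.add_sub_cancel_left, pow_add]
      linear_combination -(f.coeff i).eval (V e) * y e ^ j * this
    exact ha (tendsto_nhds_unique t4 t3)
  · have hev : ∀ x y : ℂ, Polynomial.evalEval x y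
        (Polynomial.C (Polynomial.C a * (Polynomial.X - Polynomial.C b))) = a * (x - b) := by
      intro x y
      rw [Polynomial.evalEval_C]
      simp
    simp only [hev] at tU' hkey H'
    -- here `f(U, V) = a (V - b)`, and letting `e → 0` gives `b = 0`
    obtain rfl : b = 0 := by
      have := tendsto_nhds_unique tU' ((tV.sub_const b).const_mul a)
      simpa [ha] using this
    simp only [sub_zero] at hkey H'
    rcases Nat.lt_or_ge k 2 with h | h
    · obtain rfl : k = 1 := by omega
      have hall : ∀ e, e ≠ 0 → e ≠ 1 → a * ((1 - e) * e ^ (N - 1)) = (r * e) ^ p := by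
        intro e h0 h1
        obtain ⟨V', -, h3⟩ := H' e h0 h1
        simpa [hg1' rfl] using h3
      -- comparing absolute values at `2` and `-2`
      have e1 := congrArg norm (hall 2 (by norm_num) (by norm_num))
      have e2 := congrArg norm (hall (-2) (by norm_num) (by norm_num))
      have n1 : ‖(1 : ℂ) - 2‖ = 1 := by norm_num
      have n2 : ‖(1 : ℂ) - -2‖ = 3 := by norm_num
      simp only [norm_mul, norm_pow, norm_neg, n1, n2] at e1 e2
      have : ‖a‖ * ‖(2 : ℂ)‖ ^ (N - 1) = 0 := by linear_combination (e2 - e1) / 2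
      simp [ha] at this
    · -- dividing the equation by `e ^ (N - 1)` leaves `a (1 - e)` on one side and a function
      -- tending to `0` on the other
      obtain ⟨m, rfl⟩ := Nat.exists_eq_add_of_le h
      have t1 : Tendsto (fun e : ℂ => a * (1 - e)) (𝓝[≠] 0) (𝓝 (a * (1 - 0))) :=
        (tendsto_const_nhds.sub te).const_mul a
      have t2 : Tendsto (fun e : ℂ => e * W e * (w e ^ m * (r * e) ^ p - G.eval (w e)))
          (𝓝[≠] 0) (𝓝 (0 * (-r ^ N) * (0 ^ m * 0 - G.eval 0))) :=
        (te.mul tW).mul (((tw.pow m).mul tre).sub tG)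
      have t3 : Tendsto (fun e : ℂ => a * (1 - e)) (𝓝[≠] 0)
          (𝓝 (0 * (-r ^ N) * (0 ^ m * 0 - G.eval 0))) := by
        refine t2.congr' (good.mono fun e he => ?_)
        have h1 := hkey e he.1 he.2.1 he.2.2
        have h2 : 2 + m - 1 = m + 1 := by omega
        have h3 : w e = e ^ (N - 1) * (e * W e) := by
          rw [← mul_assoc, ← pow_succ, Nat.sub_add_cancel (by omega)]
        apply mul_left_cancel₀ (pow_ne_zero (N - 1) he.1)
        rw [h2] at h1
        simp only [hV] at h1
        linear_combination -h1 - (w e ^ m * (r * e) ^ p - G.eval (w e)) * h3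
      have := tendsto_nhds_unique t1 t3
      simp [ha] at this

/-! ### Complex conjugation and the unit -/

/-- Complex conjugation of the coefficients of a polynomial, as a ring endomorphism of `ℂ[x,y]`. -/
noncomputable def conjMap : MvPolynomial (Fin 2) ℂ →+* MvPolynomial (Fin 2) ℂ :=
  MvPolynomial.map (starRingEnd ℂ)

theorem conjMap_conjMap (q : MvPolynomial (Fin 2) ℂ) : conjMap (conjMap q) = q := by
  rw [conjMap, MvPolynomial.map_map]
  have : (starRingEnd ℂ).comp (starRingEnd ℂ) = RingHom.id ℂ := by ext; simp
  rw [this, MvPolynomial.map_id]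

theorem conjMap_map_ofReal (q : MvPolynomial (Fin 2) ℝ) :
    conjMap (MvPolynomial.map (algebraMap ℝ ℂ) q) = MvPolynomial.map (algebraMap ℝ ℂ) q := by
  rw [conjMap, MvPolynomial.map_map]
  have : (starRingEnd ℂ).comp (algebraMap ℝ ℂ) = algebraMap ℝ ℂ := by ext; simp
  rw [this]

theorem exists_real_of_conjMap_eq (q : MvPolynomial (Fin 2) ℂ) (hq : conjMap q = q) :
    ∃ q₀ : MvPolynomial (Fin 2) ℝ, MvPolynomial.map (algebraMap ℝ ℂ) q₀ = q := by
  change q ∈ Set.range (MvPolynomial.map (algebraMap ℝ ℂ))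
  rw [MvPolynomial.mem_range_map_iff_coeffs_subset]
  intro c hc
  obtain ⟨n, -, rfl⟩ := MvPolynomial.mem_coeffs_iff.mp hc
  have h := congrArg (MvPolynomial.coeff n) hq
  rw [conjMap, MvPolynomial.coeff_map] at h
  obtain ⟨x, hx⟩ := Complex.conj_eq_iff_real.mp h
  exact ⟨x, hx.symm⟩

theorem conjMap_aeval (q : Polynomial ℂ) (b : MvPolynomial (Fin 2) ℂ) :
    conjMap (Polynomial.aeval b q) = Polynomial.aeval (conjMap b) (q.map (starRingEnd ℂ)) := by
  rw [Polynomial.aeval_def, Polynomial.hom_eval₂, Polynomial.aeval_def, Polynomial.eval₂_map]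
  congr 1
  ext; simp [conjMap, MvPolynomial.algebraMap_eq]

theorem adjoin_conjMap (u v : MvPolynomial (Fin 2) ℂ) (huv : Algebra.adjoin ℂ {u, v} = ⊤) :
    Algebra.adjoin ℂ {conjMap u, conjMap v} = ⊤ := by
  rw [eq_top_iff]
  rintro b -
  have key : ∀ c ∈ Algebra.adjoin ℂ {u, v},
      conjMap c ∈ Algebra.adjoin ℂ {conjMap u, conjMap v} := by
    intro c hc
    induction hc using Algebra.adjoin_induction with
    | mem x hx =>
      rcases hx with rfl | rfl
      · exact Algebra.subset_adjoin (by simp)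
      · exact Algebra.subset_adjoin (by simp)
    | algebraMap z =>
      rw [MvPolynomial.algebraMap_eq, conjMap, MvPolynomial.map_C]
      exact Subalgebra.algebraMap_mem _ _
    | add x y _ _ hx hy => rw [map_add]; exact add_mem hx hy
    | mul x y _ _ hx hy => rw [map_mul]; exact mul_mem hx hy
  rw [← conjMap_conjMap b]
  exact key _ (huv ▸ Algebra.mem_top)

/-- Good asymptote, form (ii.5): if `v^{k−1}P = (1 + vF^{s+1})ᵖ − F` with
`F = uv^{k−1} + g(v)` and `P` has real coefficients, then `(A/PA)* ≠ ℝ*`. -/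
theorem stmt_7 (u v : MvPolynomial (Fin 2) ℂ)
    (huv : Algebra.adjoin ℂ {u, v} = ⊤)
    (s p k : ℕ) (hs : 1 ≤ s) (hp : 1 ≤ p) (hk : 1 ≤ k)
    (g : Polynomial ℂ) (hgdeg : g.natDegree ≤ k - 2) (hg1 : k = 1 → g = 0)
    (F : MvPolynomial (Fin 2) ℂ) (hF : F = u * v ^ (k - 1) + Polynomial.aeval v g)
    (P : MvPolynomial (Fin 2) ℂ)
    (hP : v ^ (k - 1) * P = (1 + v * F ^ (s + 1)) ^ p - F)
    (P₀ : MvPolynomial (Fin 2) ℝ)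
    (hP₀ : MvPolynomial.map (algebraMap ℝ ℂ) P₀ = P) :
    ∃ w : (MvPolynomial (Fin 2) ℝ ⧸ Ideal.span {P₀})ˣ,
      ∀ r : ℝ, (w : MvPolynomial (Fin 2) ℝ ⧸ Ideal.span {P₀}) ≠
        algebraMap ℝ (MvPolynomial (Fin 2) ℝ ⧸ Ideal.span {P₀}) r := by
  have hσP : conjMap P = P := by rw [← hP₀, conjMap_map_ofReal]
  set h := 1 + v * F ^ (s + 1) with hh
  clear_value h
  -- `h` is a unit modulo `P`
  obtain ⟨z, q, hz⟩ : ∃ z q, h * z = 1 + P * q := by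
    obtain ⟨p', rfl⟩ := Nat.exists_eq_add_of_le' hp
    refine ⟨1 - v * F ^ s * h ^ p', -v * F ^ s * v ^ (k - 1), ?_⟩
    linear_combination hh + v * F ^ s * hP
  have hσz : conjMap h * conjMap z = 1 + P * conjMap q := by
    rw [← map_mul, hz, map_add, map_mul, map_one, hσP]
  -- the norms of `h`, of its inverse `z`, and of `1 + P q` are real
  obtain ⟨n₀, hn₀⟩ := exists_real_of_conjMap_eq (h * conjMap h)
    (by rw [map_mul, conjMap_conjMap, mul_comm])
  obtain ⟨m₀, hm₀⟩ := exists_real_of_conjMap_eq (z * conjMap z)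
    (by rw [map_mul, conjMap_conjMap, mul_comm])
  obtain ⟨r₀, hr₀⟩ := exists_real_of_conjMap_eq (q + conjMap q + P * (q * conjMap q))
    (by simp only [map_add, map_mul, conjMap_conjMap, hσP]; ring)
  have hinj : Function.Injective (MvPolynomial.map (σ := Fin 2) (algebraMap ℝ ℂ)) :=
    MvPolynomial.map_injective _ (algebraMap ℝ ℂ).injective
  have hnm : n₀ * m₀ = 1 + P₀ * r₀ := by
    apply hinj
    rw [map_mul, map_add, map_mul, map_one, hn₀, hm₀, hr₀, hP₀]
    linear_combination conjMap h * conjMap z * hz + (1 + P * q) * hσz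
  have hunit : Ideal.Quotient.mk (Ideal.span {P₀}) n₀ * Ideal.Quotient.mk _ m₀ = 1 := by
    rw [← map_mul, hnm, map_add, map_mul, map_one,
      Ideal.Quotient.eq_zero_iff_mem.mpr (Ideal.mem_span_singleton_self P₀), zero_mul, add_zero]
  refine ⟨Units.mkOfMulEqOne _ _ hunit, fun r hr => ?_⟩
  obtain ⟨d₀, hd₀⟩ : ∃ d₀, n₀ - MvPolynomial.C r = P₀ * d₀ := by
    have : Ideal.Quotient.mk (Ideal.span {P₀}) n₀ = Ideal.Quotient.mk _ (MvPolynomial.C r) := hr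
    rw [Ideal.Quotient.eq, Ideal.mem_span_singleton] at this
    exact this
  have hd : h * conjMap h = MvPolynomial.C (r : ℂ) + P * MvPolynomial.map (algebraMap ℝ ℂ) d₀ := by
    have := congrArg (MvPolynomial.map (algebraMap ℝ ℂ)) hd₀
    rw [map_sub, map_mul, hn₀, hP₀, MvPolynomial.map_C] at this
    rw [← this]
    simp
  obtain ⟨E, hEu, hEv⟩ := exists_coordEquiv u v huv
  obtain ⟨E', hEu', hEv'⟩ := exists_coordEquiv _ _ (adjoin_conjMap u v huv)
  set u₁ := conjMap u with hu1
  set v₁ := conjMap v with hv1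
  set f := E.symm u₁ with hf
  -- evaluation at the point of the curve with parameter `h = e⁻¹`
  have hψ : ∀ e U V : ℂ, e ≠ 0 → e ≠ 1 → V = (1 - e) * e ^ (p * (s + 1) - 1) →
      U * V ^ (k - 1) = e⁻¹ ^ p - g.eval V →
      ∃ ψ : MvPolynomial (Fin 2) ℂ →ₐ[ℂ] ℂ, ψ u₁ = f.evalEval V U ∧ ψ P = 0 ∧ ψ h = e⁻¹ := by
    intro e U V h0 h1 hV hU
    let ψ : MvPolynomial (Fin 2) ℂ →ₐ[ℂ] ℂ := (Polynomial.aevalAeval V U).comp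
      (E.symm : MvPolynomial (Fin 2) ℂ →ₐ[ℂ] _)
    have hψu : ψ u = U := by simp [ψ, ← hEu]
    have hψv : ψ v = V := by
      change Polynomial.aevalAeval V U (E.symm v) = V
      rw [← hEv, AlgEquiv.symm_apply_apply, Polynomial.aevalAeval_X]
    have hψF : ψ F = e⁻¹ ^ p := by
      rw [hF, map_add, map_mul, map_pow, ← Polynomial.aeval_algHom_apply, hψu, hψv,
        Polynomial.coe_aeval_eq_eval]
      linear_combination hU
    have hψh : ψ h = e⁻¹ := by
      have : e ^ (p * (s + 1) - 1) * e * e⁻¹ ^ (p * (s + 1)) = 1 := by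
        rw [← pow_succ, Nat.sub_add_cancel (Nat.mul_pos hp (Nat.succ_pos s)), ← mul_pow,
          mul_inv_cancel₀ h0, one_pow]
      rw [hh, map_add, map_one, map_mul, map_pow, hψv, hψF, ← pow_mul, hV]
      have h2 : e * e⁻¹ = 1 := mul_inv_cancel₀ h0
      generalize e ^ (p * (s + 1) - 1) = a at *
      generalize e⁻¹ ^ (p * (s + 1)) = b at *
      apply mul_left_cancel₀ h0
      linear_combination (1 - e) * this - h2
    refine ⟨ψ, ?_, ?_, hψh⟩
    · change Polynomial.aevalAeval V U (E.symm u₁) = _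
      rw [Polynomial.coe_aevalAeval_eq_evalEval]
    · have hV0 : V ≠ 0 := by
        rw [hV]
        exact mul_ne_zero (sub_ne_zero.mpr h1.symm) (pow_ne_zero _ h0)
      have := congrArg ψ hP
      rw [map_mul, map_pow, map_sub, map_pow, hψv, hψF, hψh, sub_self] at this
      exact (mul_eq_zero.mp this).resolve_left (pow_ne_zero _ hV0)
  have hψh' : ∀ (e : ℂ) (ψ : MvPolynomial (Fin 2) ℂ →ₐ[ℂ] ℂ), e ≠ 0 → ψ P = 0 → ψ h = e⁻¹ →
      ψ (conjMap h) = r * e := by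
    intro e ψ h0 hψP hψh
    have := congrArg ψ hd
    rw [map_mul, map_add, map_mul, hψP, hψh, zero_mul, add_zero, ← MvPolynomial.algebraMap_eq,
      AlgHom.commutes, Algebra.algebraMap_self, RingHom.id_apply] at this
    rw [← this]
    field_simp
  refine ends_incompatible s p k hs hp hk g (g.map (starRingEnd ℂ))
    ((Polynomial.natDegree_map_le).trans hgdeg) (fun h1 => by rw [hg1 h1, Polynomial.map_zero])
    r f (coordinate_dichotomy E E' f (by rw [hf, AlgEquiv.apply_symm_apply, hEu'])) ?_
  intro e U V h0 h1 hV hU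
  obtain ⟨ψ, hψu, hψP, hψh⟩ := hψ e U V h0 h1 hV hU
  have h3 := hψh' e ψ h0 hψP hψh
  have hF' : conjMap F = u₁ * v₁ ^ (k - 1) + Polynomial.aeval v₁ (g.map (starRingEnd ℂ)) := by
    rw [hF, map_add, map_mul, map_pow, conjMap_aeval]
  have hψF : ψ (conjMap F) = (r * e) ^ p := by
    have := congrArg (fun b => ψ (conjMap b)) hP
    simp only [map_mul, map_sub, map_pow, hσP, hψP, h3] at this
    linear_combination this
  refine ⟨ψ v₁, ?_, ?_⟩
  · have : ψ (conjMap h) = 1 + ψ v₁ * ψ (conjMap F) ^ (s + 1) := by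
      rw [hh]; simp only [map_add, map_mul, map_pow, map_one, hv1]
    rw [h3, hψF, ← pow_mul] at this
    linear_combination -this
  · rw [hF', map_add, map_mul, map_pow, ← Polynomial.aeval_algHom_apply, hψu,
      Polynomial.coe_aeval_eq_eval] at hψF
    linear_combination hψF
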